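/- Let A be an algebra with a unary operation ¬. Then A belongs to Alg(S_N), i.e., the Tarski congruence of the g-matrix ⟨A, Fi_{S_N}(A)⟩ is the identity relation, if and only if A satisfies both: (i) ¬¬a = a for all a ∈ A, and (ii) for all a, b ∈ A, if a = ¬a and b = ¬b then a = b. -/

import Mathlib

/-- Formulas of the algebraic language with a single unary connective ¬,
built as the absolutely free algebra over a countably infinite set of variables. -/
inductive Fm : Type where
  | var : ℕ → Fm
  | neg : Fm → Fm

/-- The {¬}-fragment ⊢_N of classical propositional logic: Γ ⊢_N α iff every
homomorphism h from Fm to the two-element algebra 2_¬ = ⟨{0,1},¬⟩ (¬0 = 1, ¬1 = 0)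
with h[Γ] ⊆ {1} satisfies h(α) = 1. -/
def DerivN (Γ : Set Fm) (α : Fm) : Prop :=
  ∀ h : Fm → Bool, (∀ φ : Fm, h (Fm.neg φ) = !(h φ)) →
    (∀ γ ∈ Γ, h γ = true) → h α = true

/-- F ⊆ A is an S_N-filter of the algebra ⟨A, neg⟩ if for all Γ ∪ {α} ⊆ Fm with
Γ ⊢_N α and every homomorphism h : Fm → A, h[Γ] ⊆ F implies h(α) ∈ F. -/
def IsSNFilter {A : Type*} (neg : A → A) (F : Set A) : Prop :=
  ∀ (Γ : Set Fm) (α : Fm), DerivN Γ α →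
    ∀ h : Fm → A, (∀ φ : Fm, h (Fm.neg φ) = neg (h φ)) →
      (∀ γ ∈ Γ, h γ ∈ F) → h α ∈ F

/-- `Fig neg B` is the least S_N-filter of ⟨A, neg⟩ containing B
(the intersection of all S_N-filters containing B). -/
def Fig {A : Type*} (neg : A → A) (B : Set A) : Set A :=
  {a | ∀ F : Set A, IsSNFilter neg F → B ⊆ F → a ∈ F}

/-- The homomorphism from the formula algebra extending an assignment of the variables. -/
def Fm.lift {A : Type*} (neg : A → A) (v : ℕ → A) : Fm → A
  | .var n => v n
  | .neg φ => neg (Fm.lift neg v φ)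

theorem IsSNFilter.neg_neg_mem_iff {A : Type*} {neg : A → A} {F : Set A}
    (hF : IsSNFilter neg F) (a : A) : neg (neg a) ∈ F ↔ a ∈ F := by
  constructor
  · intro ha
    refine hF {.neg (.neg (.var 0))} (.var 0) ?_ (Fm.lift neg fun _ => a) (fun _ => rfl) ?_
    · intro h hn hΓ
      simpa [hn] using hΓ _ rfl
    · rintro _ rfl
      exact ha
  · intro ha
    refine hF {.var 0} (.neg (.neg (.var 0))) ?_ (Fm.lift neg fun _ => a) (fun _ => rfl) ?_
    · intro h hn hΓ
      simpa [hn] using hΓ _ rfl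
    · rintro _ rfl
      exact ha

theorem IsSNFilter.mem_of_mem_of_neg_mem {A : Type*} {neg : A → A} {F : Set A}
    (hF : IsSNFilter neg F) {a : A} (ha : a ∈ F) (hna : neg a ∈ F) (b : A) : b ∈ F := by
  refine hF {.var 0, .neg (.var 0)} (.var 1) ?_
    (Fm.lift neg fun n => if n = 0 then a else b) (fun _ => rfl) ?_
  · intro h hn hΓ
    have h0 := hΓ (.var 0) (by simp)
    have h1 := hΓ (.neg (.var 0)) (by simp)
    simp [hn, h0] at h1
  · rintro _ (rfl | rfl)
    · exact ha
    · exact hna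

/-- In an involutive algebra the singleton of an element that is not fixed by negation is an
`S_N`-filter. -/
theorem isSNFilter_singleton {A : Type*} {neg : A → A} (hinv : ∀ a, neg (neg a) = a)
    {a : A} (ha : neg a ≠ a) : IsSNFilter neg {a} := by
  classical
  intro Γ α hΓα h hh hΓ
  let g (c : Bool) : Fm → Bool := Fm.lift not fun n =>
    if h (.var n) = a then true else if h (.var n) = neg a then false else c
  have hg (c : Bool) (φ : Fm) : g c (.neg φ) = !(g c φ) := rfl
  have key (φ : Fm) : (h φ = a ∧ ∀ c, g c φ = true) ∨ (h φ = neg a ∧ ∀ c, g c φ = false) ∨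
      (h φ ≠ a ∧ h φ ≠ neg a ∧ g true φ = !(g false φ)) := by
    induction φ with
    | var n =>
      by_cases h1 : h (.var n) = a
      · simp [g, Fm.lift, h1]
      · by_cases h2 : h (.var n) = neg a
        · simp [g, Fm.lift, h2, ha]
        · simp [g, Fm.lift, h1, h2]
    | neg φ ih =>
      rcases ih with ⟨h1, h2⟩ | ⟨h1, h2⟩ | ⟨h1, h2, h3⟩
      · exact .inr (.inl ⟨by rw [hh, h1], fun c => by simp [hg, h2]⟩)
      · exact .inl ⟨by rw [hh, h1, hinv], fun c => by simp [hg, h2]⟩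
      · refine .inr (.inr ⟨fun e => h2 ?_, fun e => h1 ?_, by simp [hg, h3]⟩)
        · rw [← e, hh, hinv]
        · rw [← hinv (h φ), ← hh, e, hinv]
  have hα (c : Bool) : g c α = true := by
    refine hΓα (g c) (hg c) fun γ hγ => ?_
    have hγa : h γ = a := hΓ γ hγ
    rcases key γ with ⟨_, h2⟩ | ⟨h1, _⟩ | ⟨h1, _⟩
    · exact h2 c
    · exact absurd (h1.symm.trans hγa) ha
    · exact absurd hγa h1
  rcases key α with ⟨h1, _⟩ | ⟨_, h2⟩ | ⟨_, _, h3⟩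
  · exact h1
  · simp [hα] at h2
  · simp [hα] at h3

theorem Fig_singleton_eq_of_forall_mem_iff {A : Type*} {neg : A → A} {a b : A}
    (hab : ∀ F, IsSNFilter neg F → (a ∈ F ↔ b ∈ F)) : Fig neg {a} = Fig neg {b} := by
  ext x
  simp only [Fig, Set.mem_ofPred_eq, Set.singleton_subset_iff]
  exact forall₂_congr fun F hF => by rw [hab F hF]

theorem eq_of_Fig_singleton_eq {A : Type*} {neg : A → A} (hinv : ∀ a, neg (neg a) = a)
    {a b : A} (ha : neg a ≠ a) (hab : Fig neg {a} = Fig neg {b}) : a = b := by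
  have hb : b ∈ Fig neg {a} := hab ▸ fun _ _ hF => hF rfl
  exact (hb {a} (isSNFilter_singleton hinv ha) subset_rfl).symm

/-- A ∈ Alg(S_N): the Tarski congruence of ⟨A, Fi_{S_N}(A)⟩ — the largest
congruence θ with θ a b → Fig({a}) = Fig({b}) — is the identity (i.e. every
such congruence is contained in the identity) iff (i) ¬¬a = a for all a, and
(ii) a = ¬a and b = ¬b imply a = b. -/
theorem stmt19 {A : Type*} (neg : A → A) :
    (∀ θ : A → A → Prop, Equivalence θ → (∀ a b : A, θ a b → θ (neg a) (neg b)) →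
      (∀ a b : A, θ a b → Fig neg {a} = Fig neg {b}) →
      ∀ a b : A, θ a b → a = b) ↔
    ((∀ a : A, neg (neg a) = a) ∧
     (∀ a b : A, neg a = a → neg b = b → a = b)) := by
  constructor
  · intro H
    have sep (a b : A)
        (hab : ∀ k F, IsSNFilter neg F → (neg^[k] a ∈ F ↔ neg^[k] b ∈ F)) : a = b := by
      refine H (fun x y => ∀ k F, IsSNFilter neg F → (neg^[k] x ∈ F ↔ neg^[k] y ∈ F))
        ⟨fun _ _ _ _ => Iff.rfl, fun h k F hF => (h k F hF).symm,
          fun h h' k F hF => (h k F hF).trans (h' k F hF)⟩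
        (fun _ _ h k => h (k + 1))
        (fun _ _ h => Fig_singleton_eq_of_forall_mem_iff (h 0)) a b hab
    refine ⟨fun a => sep _ _ fun k F hF => ?_, fun a b ha hb => sep _ _ fun k F hF => ?_⟩
    · rw [← Function.iterate_succ_apply, ← Function.iterate_succ_apply,
        Function.iterate_succ_apply', Function.iterate_succ_apply']
      exact hF.neg_neg_mem_iff _
    · rw [Function.iterate_fixed ha, Function.iterate_fixed hb]
      exact ⟨fun h => hF.mem_of_mem_of_neg_mem h (ha.symm ▸ h) b,
        fun h => hF.mem_of_mem_of_neg_mem h (hb.symm ▸ h) a⟩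
  · rintro ⟨hinv, hfix⟩ θ - - hθ a b hab
    by_cases ha : neg a = a
    · by_cases hb : neg b = b
      · exact hfix a b ha hb
      · exact (eq_of_Fig_singleton_eq hinv hb (hθ a b hab).symm).symm
    · exact eq_of_Fig_singleton_eq hinv ha (hθ a b hab)
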